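/- Let ν be a σ-finite measure on a measurable space K, let α and β be finite measures on K with α ≪ ν and β ≪ ν, and let γ be a finite signed measure on K with γ ≪ ν. Suppose that for all rational numbers s, t and every measurable set B one has s²·α(B) − 2st·γ(B) + t²·β(B) ≥ 0. Then (dγ/dν)² ≤ (dα/dν)·(dβ/dν) holds ν-almost everywhere, and consequently ∫_K (√(dα/dν) − √(dβ/dν))² dν ≤ α(K) − 2γ(K) + β(K). -/

import Mathlib

open MeasureTheory

/-!
The map `σ ↦ dσ/dν` is linear and positive on signed measures, and so carries nonnegativity of
`s² α - 2 s t γ + t² β`, for all rational `s` and `t`, over to the densities at almost every point.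
There the Cauchy–Schwarz inequality holds by density of `ℚ` in `ℝ` and the discriminant criterion,
and it gives `(√(dα/dν) - √(dβ/dν))² ≤ dα/dν - 2 dγ/dν + dβ/dν`. The right-hand side is the density
of the nonnegative measure `α - 2 γ + β`, whose integral is at most the total mass of that measure:
a part singular to `ν` only helps.
-/

section BinaryForm

/-- The quadratic form `s² a - 2 s t c + t² b` in the real variables `s` and `t`. For energy
measures `a = ν_f`, `b = ν_g` and `c = ν_{f,g}` it is the energy measure of `s f - t g`. The
coefficients lie in a real module, so that the form of three signed measures can be compared with
the form of their densities at a point. -/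
def binaryForm {M : Type*} [AddCommGroup M] [Module ℝ M] (a b c : M) (s t : ℝ) : M :=
  s ^ 2 • a - (2 * s * t) • c + t ^ 2 • b

variable {a b c : ℝ}

theorem sq_le_mul_of_forall_rat_binaryForm_nonneg
    (h : ∀ s t : ℚ, 0 ≤ binaryForm a b c s t) : c ^ 2 ≤ a * b := by
  have hreal (s : ℝ) : 0 ≤ binaryForm a b c s 1 := by
    refine (Rat.denseRange_cast (𝕜 := ℝ)).induction_on (p := fun s => 0 ≤ binaryForm a b c s 1) s
      (isClosed_le continuous_const ?_) fun q => by simpa using h q 1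
    unfold binaryForm
    fun_prop
  have hdiscrim : discrim a (-2 * c) b ≤ 0 := discrim_le_zero fun s => by
    have hs := hreal s
    simp only [binaryForm, smul_eq_mul] at hs
    linarith
  rw [discrim] at hdiscrim
  linarith

theorem sq_sqrt_sub_sqrt_le_binaryForm (ha : 0 ≤ a) (hb : 0 ≤ b) (hc : c ^ 2 ≤ a * b) :
    (√a - √b) ^ 2 ≤ binaryForm a b c 1 1 := by
  have hc' : c ≤ √a * √b := by
    rw [← Real.sqrt_mul ha]
    exact Real.le_sqrt_of_sq_le hc
  calc (√a - √b) ^ 2 = a - 2 * (√a * √b) + b := by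
        rw [sub_sq, Real.sq_sqrt ha, Real.sq_sqrt hb, mul_assoc]
    _ ≤ a - 2 * c + b := by gcongr
    _ = binaryForm a b c 1 1 := by simp [binaryForm]

end BinaryForm

section RadonNikodym

variable {K : Type*} [MeasurableSpace K]

theorem toJordanDecomposition_toSignedMeasure (μ : Measure K) [IsFiniteMeasure μ] :
    μ.toSignedMeasure.toJordanDecomposition = ⟨μ, 0, .zero_right⟩ := by
  apply SignedMeasure.toJordanDecomposition_eq
  simp [JordanDecomposition.toSignedMeasure]

instance haveLebesgueDecomposition_toSignedMeasure (μ ν : Measure K) [IsFiniteMeasure μ]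
    [μ.HaveLebesgueDecomposition ν] : μ.toSignedMeasure.HaveLebesgueDecomposition ν where
  posPart := by rwa [toJordanDecomposition_toSignedMeasure]
  negPart := by
    rw [toJordanDecomposition_toSignedMeasure]
    infer_instance

theorem rnDeriv_toSignedMeasure (μ ν : Measure K) [IsFiniteMeasure μ] :
    μ.toSignedMeasure.rnDeriv ν =ᵐ[ν] fun x => (μ.rnDeriv ν x).toReal := by
  filter_upwards [Measure.rnDeriv_zero ν] with x hx
  simp [SignedMeasure.rnDeriv_def, toJordanDecomposition_toSignedMeasure, hx]

theorem exists_toSignedMeasure_eq_of_nonneg {σ : SignedMeasure K} (hσ : 0 ≤ σ) :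
    ∃ (μ : Measure K) (_ : IsFiniteMeasure μ), μ.toSignedMeasure = σ :=
  ⟨_, inferInstance, SignedMeasure.toMeasureOfZeroLE_toSignedMeasure σ
    ((VectorMeasure.le_restrict_univ_iff_le 0 σ).2 hσ)⟩

variable {σ : SignedMeasure K}

theorem rnDeriv_nonneg_of_nonneg (ν : Measure K) (hσ : 0 ≤ σ) : 0 ≤ᵐ[ν] σ.rnDeriv ν := by
  obtain ⟨μ, _, rfl⟩ := exists_toSignedMeasure_eq_of_nonneg hσ
  filter_upwards [rnDeriv_toSignedMeasure μ ν] with x hx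
  rw [hx]
  exact ENNReal.toReal_nonneg

theorem integral_rnDeriv_le_of_nonneg (ν : Measure K) (hσ : 0 ≤ σ) :
    ∫ x, σ.rnDeriv ν x ∂ν ≤ σ Set.univ := by
  obtain ⟨μ, _, rfl⟩ := exists_toSignedMeasure_eq_of_nonneg hσ
  rw [integral_congr_ae (rnDeriv_toSignedMeasure μ ν),
    Measure.toSignedMeasure_apply_measurable MeasurableSet.univ, ← setIntegral_univ]
  exact Measure.setIntegral_toReal_rnDeriv_le (measure_ne_top μ _)

variable {ν : Measure K} {α β γ : SignedMeasure K} [α.HaveLebesgueDecomposition ν]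
  [β.HaveLebesgueDecomposition ν] [γ.HaveLebesgueDecomposition ν]

variable (α β γ) in
theorem rnDeriv_binaryForm (s t : ℝ) :
    (binaryForm α β γ s t).rnDeriv ν =ᵐ[ν]
      fun x => binaryForm (α.rnDeriv ν x) (β.rnDeriv ν x) (γ.rnDeriv ν x) s t := by
  have hα := (SignedMeasure.integrable_rnDeriv α ν).smul (s ^ 2)
  have hβ := (SignedMeasure.integrable_rnDeriv β ν).smul (t ^ 2)
  have hγ := (SignedMeasure.integrable_rnDeriv γ ν).smul (2 * s * t)
  have hsing : binaryForm (α.singularPart ν) (β.singularPart ν) (γ.singularPart ν) s t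
      ⟂ᵥ ν.toENNRealVectorMeasure := by
    have hsing' (σ : SignedMeasure K) (r : ℝ) :
        r • σ.singularPart ν ⟂ᵥ ν.toENNRealVectorMeasure :=
      (SignedMeasure.mutuallySingular_singularPart σ ν).smul_left r
    unfold binaryForm
    rw [sub_eq_add_neg]
    exact ((hsing' α _).add_left (hsing' γ _).neg_left).add_left (hsing' β _)
  refine (SignedMeasure.eq_rnDeriv _ _ ((hα.sub hγ).add hβ) hsing ?_).symm
  rw [withDensityᵥ_add (hα.sub hγ) hβ, withDensityᵥ_sub hα hγ, withDensityᵥ_smul,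
    withDensityᵥ_smul, withDensityᵥ_smul]
  calc binaryForm α β γ s t
      = binaryForm (α.singularPart ν + ν.withDensityᵥ (α.rnDeriv ν))
          (β.singularPart ν + ν.withDensityᵥ (β.rnDeriv ν))
          (γ.singularPart ν + ν.withDensityᵥ (γ.rnDeriv ν)) s t := by
        simp only [SignedMeasure.singularPart_add_withDensity_rnDeriv_eq]
    _ = _ := by
        unfold binaryForm
        module

theorem ae_forall_rat_binaryForm_rnDeriv_nonneg (h : ∀ s t : ℚ, 0 ≤ binaryForm α β γ s t) :
    ∀ᵐ x ∂ν, ∀ s t : ℚ,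
      0 ≤ binaryForm (α.rnDeriv ν x) (β.rnDeriv ν x) (γ.rnDeriv ν x) s t := by
  refine ae_all_iff.2 fun s => ae_all_iff.2 fun t => ?_
  filter_upwards [rnDeriv_nonneg_of_nonneg ν (h s t),
    rnDeriv_binaryForm (ν := ν) α β γ s t] with x hnonneg heq
  rwa [← heq]

theorem ae_sq_rnDeriv_le_mul (h : ∀ s t : ℚ, 0 ≤ binaryForm α β γ s t) :
    ∀ᵐ x ∂ν, γ.rnDeriv ν x ^ 2 ≤ α.rnDeriv ν x * β.rnDeriv ν x := by
  filter_upwards [ae_forall_rat_binaryForm_rnDeriv_nonneg h] with x hx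
    using sq_le_mul_of_forall_rat_binaryForm_nonneg hx

theorem integral_sq_sqrt_rnDeriv_sub_le (h : ∀ s t : ℚ, 0 ≤ binaryForm α β γ s t) :
    ∫ x, (√(α.rnDeriv ν x) - √(β.rnDeriv ν x)) ^ 2 ∂ν ≤ binaryForm α β γ 1 1 Set.univ := by
  have hα : 0 ≤ α := by simpa [binaryForm] using h 1 0
  have hβ : 0 ≤ β := by simpa [binaryForm] using h 0 1
  calc ∫ x, (√(α.rnDeriv ν x) - √(β.rnDeriv ν x)) ^ 2 ∂ν
      ≤ ∫ x, (binaryForm α β γ 1 1).rnDeriv ν x ∂ν := by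
        refine integral_mono_of_nonneg (.of_forall fun x => sq_nonneg _)
          (SignedMeasure.integrable_rnDeriv _ ν) ?_
        filter_upwards [ae_sq_rnDeriv_le_mul h, rnDeriv_nonneg_of_nonneg ν hα,
          rnDeriv_nonneg_of_nonneg ν hβ, rnDeriv_binaryForm α β γ 1 1] with x hcs hαx hβx heq
        rw [heq]
        exact sq_sqrt_sub_sqrt_le_binaryForm hαx hβx hcs
    _ ≤ binaryForm α β γ 1 1 Set.univ :=
        integral_rnDeriv_le_of_nonneg ν (by simpa using h 1 1)

end RadonNikodym

theorem binaryForm_toSignedMeasure_apply {K : Type*} [MeasurableSpace K]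
    (α β : Measure K) [IsFiniteMeasure α] [IsFiniteMeasure β] (γ : SignedMeasure K)
    (s t : ℝ) {B : Set K} (hB : MeasurableSet B) :
    binaryForm α.toSignedMeasure β.toSignedMeasure γ s t B =
      s ^ 2 * (α B).toReal - 2 * s * t * γ B + t ^ 2 * (β B).toReal := by
  simp [binaryForm, Measure.toSignedMeasure_apply_measurable hB, Measure.real_def]

theorem stmt1_general {K : Type*} [MeasurableSpace K]
    (ν α β : Measure K) [IsFiniteMeasure α] [IsFiniteMeasure β]
    [α.HaveLebesgueDecomposition ν] [β.HaveLebesgueDecomposition ν]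
    (γ : SignedMeasure K) [γ.HaveLebesgueDecomposition ν]
    (hpos : ∀ (s t : ℚ) (B : Set K), MeasurableSet B →
      0 ≤ (s : ℝ) ^ 2 * (α B).toReal - 2 * (s : ℝ) * (t : ℝ) * γ B
        + (t : ℝ) ^ 2 * (β B).toReal) :
    (∀ᵐ x ∂ν, (γ.rnDeriv ν x) ^ 2 ≤ (α.rnDeriv ν x).toReal * (β.rnDeriv ν x).toReal) ∧
    ∫ x, (√(α.rnDeriv ν x).toReal - √(β.rnDeriv ν x).toReal) ^ 2 ∂ν
      ≤ (α Set.univ).toReal - 2 * γ Set.univ + (β Set.univ).toReal := by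
  have hform (s t : ℚ) : 0 ≤ binaryForm α.toSignedMeasure β.toSignedMeasure γ s t :=
    fun B hB => (hpos s t B hB).trans_eq (binaryForm_toSignedMeasure_apply α β γ s t hB).symm
  have hαβ := (rnDeriv_toSignedMeasure α ν).and (rnDeriv_toSignedMeasure β ν)
  constructor
  · filter_upwards [hαβ, ae_sq_rnDeriv_le_mul hform] with x ⟨hαx, hβx⟩ hcs
    rwa [← hαx, ← hβx]
  · calc ∫ x, (√(α.rnDeriv ν x).toReal - √(β.rnDeriv ν x).toReal) ^ 2 ∂ν
        = ∫ x, (√(α.toSignedMeasure.rnDeriv ν x) - √(β.toSignedMeasure.rnDeriv ν x)) ^ 2 ∂ν := by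
          refine integral_congr_ae ?_
          filter_upwards [hαβ] with x ⟨hαx, hβx⟩
          rw [hαx, hβx]
      _ ≤ binaryForm α.toSignedMeasure β.toSignedMeasure γ 1 1 Set.univ :=
          integral_sq_sqrt_rnDeriv_sub_le hform
      _ = (α Set.univ).toReal - 2 * γ Set.univ + (β Set.univ).toReal := by
          simp [binaryForm_toSignedMeasure_apply]

/-- Abstract content of Lemma 2.3(i): if `s²·α(B) − 2st·γ(B) + t²·β(B) ≥ 0` for all rationals
`s, t` and all measurable `B`, then `(dγ/dν)² ≤ (dα/dν)·(dβ/dν)` ν-a.e., and the square-root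
inequality for the integrals follows. -/
theorem stmt1 {K : Type*} [MeasurableSpace K]
    (ν : Measure K) [SigmaFinite ν]
    (α β : Measure K) [IsFiniteMeasure α] [IsFiniteMeasure β]
    (hα : α ≪ ν) (hβ : β ≪ ν)
    (γ : SignedMeasure K)
    (hγ : γ ≪ᵥ ν.toENNRealVectorMeasure)
    (hpos : ∀ (s t : ℚ) (B : Set K), MeasurableSet B →
      0 ≤ (s : ℝ) ^ 2 * (α B).toReal - 2 * (s : ℝ) * (t : ℝ) * γ B
        + (t : ℝ) ^ 2 * (β B).toReal) :
    (∀ᵐ x ∂ν, (SignedMeasure.rnDeriv γ ν x) ^ 2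
        ≤ (α.rnDeriv ν x).toReal * (β.rnDeriv ν x).toReal) ∧
    ∫ x, (Real.sqrt (α.rnDeriv ν x).toReal - Real.sqrt (β.rnDeriv ν x).toReal) ^ 2 ∂ν
      ≤ (α Set.univ).toReal - 2 * γ Set.univ + (β Set.univ).toReal :=
  stmt1_general ν α β γ hpos
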